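/- arXiv:2009.05851 — 3 statements merged into one kernel-verified Lean document; each statement's English description precedes it below -/
import Mathlib

section
/- Fix reals k, ωᵣ, ω_i, t₀, x₀, y₀, U, U′, ûᵣ, ûᵢ, v̂ᵣ, v̂ᵢ with g := ω_i² + ωᵣ² − 2ωᵣkU + k²U² ≠ 0. For T ∈ ℝ set θ₀ := kx₀ − ωᵣt₀ and θ_T := kx₀ − ωᵣ(t₀+T) + kUT, and define f₁(T) = −e^{ω_i t₀}ω_i cos θ₀ + e^{ω_i t₀}(ωᵣ−kU) sin θ₀ + e^{ω_i(t₀+T)}ω_i cos θ_T − e^{ω_i(t₀+T)}(ωᵣ−kU) sin θ_T; f₂(T) = e^{ω_i t₀}ω_i sin θ₀ + e^{ω_i t₀}(ωᵣ−kU) cos θ₀ − e^{ω_i(t₀+T)}ω_i sin θ_T − e^{ω_i(t₀+T)}(ωᵣ−kU) cos θ_T; f₃(T) = −e^{ω_i t₀}(ω_i² + ω_i³T − ωᵣ² + ω_iωᵣ²T − k²U² + ω_ik²U²T + 2ωᵣkU − 2ω_iωᵣkUT) cos θ₀ + e^{ω_i t₀}(2ω_iωᵣ + ω_i²ωᵣT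 + ωᵣ³T − k³U³T + 3ωᵣk²U²T − 2ω_ikU − ω_i²kUT − 3ωᵣ²kUT) sin θ₀ + e^{ω_i(t₀+T)}(ω_i² − ωᵣ² − k²U² + 2ωᵣkU) cos θ_T − e^{ω_i(t₀+T)}(2ω_iωᵣ − 2ω_ikU) sin θ_T; f₄(T) = e^{ω_i t₀}(ω_i² + ω_i³T − ωᵣ² + ω_iωᵣ²T − k²U² + ω_ik²U²T + 2ωᵣkU − 2ω_iωᵣkUT) sin θ₀ + e^{ω_i t₀}(2ω_iωᵣ + ω_i²ωᵣT + ωᵣ³T − k³U³T + 3ωᵣk²U²T − 2ω_ikU − ω_i²kUT − 3ωᵣ²kUT) cos θ₀ − e^{ω_i(t₀+T)}(ω_i² − ωᵣ² − k²U² + 2ωᵣkU) sin θ_T − e^{ω_i(t₀+T)}(2ω_iωᵣ − 2ω_ikU) cos θ_T; and as before f₅, f₆ with A₂(T) = (f₅v̂ᵣ + f₆v̂ᵢ)/g. Then the function A₁(T) := (f₁(T)ûᵣ + f₂(T)ûᵢ)/g + U′·(f₃(T)v̂ᵣ + f₄(T)v̂ᵢ)/g² satisfies A₁(0) = 0 and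 dA₁/dT = U′·A₂(T) + e^{ω_i(t₀+T)}(ûᵣ cos θ_T − ûᵢ sin θ_T) for all T. -/
/-!
Write `d = ωr - k U`, so that `g = ωi² + d²`, and set `C = e^{ωi(t₀+T)} cos θ_T`,
`S = e^{ωi(t₀+T)} sin θ_T`. Since `θ_T` has slope `-d`, the pair satisfies the linear system
`C' = ωi C + d S`, `S' = ωi S - d C`. Every `fⱼ` is a combination of `C`, `S` and an affine
function of `T`, so differentiating gives `f₁' = g C`, `f₂' = -g S`, `f₃' = g f₅`, `f₄' = g f₆`,
where the coefficients of `T` in `f₃` and `f₄` are `ωi g` and `d g` up to sign. Dividing by `g`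
and `g²` yields the differential equation. At `T = 0` one has `θ_T = θ₀`, and the numerators
cancel.
-/

/-- The equation `C' = ωi C + d S` for the amplified cosine along the base-flow trajectory. -/
lemma hasDerivAt_exp_mul_cos_phase (k ωr ωi t₀ x₀ U T : ℝ) :
    HasDerivAt
      (fun T => Real.exp (ωi * (t₀ + T)) * Real.cos (k * x₀ - ωr * (t₀ + T) + k * U * T))
      (ωi * (Real.exp (ωi * (t₀ + T)) * Real.cos (k * x₀ - ωr * (t₀ + T) + k * U * T))
        + (ωr - k * U) *
          (Real.exp (ωi * (t₀ + T)) * Real.sin (k * x₀ - ωr * (t₀ + T) + k * U * T))) T := by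
  have ht := (hasDerivAt_id' T).const_add t₀
  have hθ := ((ht.const_mul ωr).const_sub (k * x₀)).add ((hasDerivAt_id' T).const_mul (k * U))
  refine ((ht.const_mul ωi).exp.mul hθ.cos).congr_deriv ?_
  simp only [Pi.add_apply]
  ring

/-- The equation `S' = ωi S - d C` for the amplified sine along the base-flow trajectory. -/
lemma hasDerivAt_exp_mul_sin_phase (k ωr ωi t₀ x₀ U T : ℝ) :
    HasDerivAt
      (fun T => Real.exp (ωi * (t₀ + T)) * Real.sin (k * x₀ - ωr * (t₀ + T) + k * U * T))
      (ωi * (Real.exp (ωi * (t₀ + T)) * Real.sin (k * x₀ - ωr * (t₀ + T) + k * U * T))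
        - (ωr - k * U) *
          (Real.exp (ωi * (t₀ + T)) * Real.cos (k * x₀ - ωr * (t₀ + T) + k * U * T))) T := by
  have ht := (hasDerivAt_id' T).const_add t₀
  have hθ := ((ht.const_mul ωr).const_sub (k * x₀)).add ((hasDerivAt_id' T).const_mul (k * U))
  refine ((ht.const_mul ωi).exp.mul hθ.sin).congr_deriv ?_
  simp only [Pi.add_apply]
  ring

/-- The common shape of `f₁`, …, `f₄`: an affine function of `T` plus a combination of
`C` and `S`. -/
lemma hasDerivAt_affine_add_phase (k ωr ωi t₀ x₀ U a b p q T : ℝ) :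
    HasDerivAt
      (fun T => a + b * T
        + p * (Real.exp (ωi * (t₀ + T)) * Real.cos (k * x₀ - ωr * (t₀ + T) + k * U * T))
        + q * (Real.exp (ωi * (t₀ + T)) * Real.sin (k * x₀ - ωr * (t₀ + T) + k * U * T)))
      (b + (p * ωi - q * (ωr - k * U)) *
          (Real.exp (ωi * (t₀ + T)) * Real.cos (k * x₀ - ωr * (t₀ + T) + k * U * T))
        + (p * (ωr - k * U) + q * ωi) *
          (Real.exp (ωi * (t₀ + T)) * Real.sin (k * x₀ - ωr * (t₀ + T) + k * U * T))) T := by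
  have hC := hasDerivAt_exp_mul_cos_phase k ωr ωi t₀ x₀ U T
  have hS := hasDerivAt_exp_mul_sin_phase k ωr ωi t₀ x₀ U T
  refine (((((hasDerivAt_id' T).const_mul b).const_add a).add (hC.const_mul p)).add
    (hS.const_mul q)).congr_deriv ?_
  ring

/-- The streamwise component
`A₁(T) = (f₁(T)ûᵣ + f₂(T)ûᵢ)/g + U′(f₃(T)v̂ᵣ + f₄(T)v̂ᵢ)/g²` of the leading-order
flow-map deviation satisfies `A₁(0) = 0` and
`dA₁/dT = U′·A₂(T) + e^{ω_i(t₀+T)}(ûᵣ cos θ_T − ûᵢ sin θ_T)` for all `T`, where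
`A₂(T) = (f₅(T)v̂ᵣ + f₆(T)v̂ᵢ)/g` is the transverse deviation component. -/
theorem A1_displacement_ivp
    (k ωr ωi t₀ x₀ y₀ U U' ur ui vr vi : ℝ)
    (hg : ωi ^ 2 + ωr ^ 2 - 2 * ωr * k * U + k ^ 2 * U ^ 2 ≠ 0) :
    let g : ℝ := ωi ^ 2 + ωr ^ 2 - 2 * ωr * k * U + k ^ 2 * U ^ 2;
    let θ₀ : ℝ := k * x₀ - ωr * t₀;
    let θT : ℝ → ℝ := fun T => k * x₀ - ωr * (t₀ + T) + k * U * T;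
    let f₁ : ℝ → ℝ := fun T =>
      -Real.exp (ωi * t₀) * ωi * Real.cos θ₀ + Real.exp (ωi * t₀) * (ωr - k * U) * Real.sin θ₀
      + Real.exp (ωi * (t₀ + T)) * ωi * Real.cos (θT T)
      - Real.exp (ωi * (t₀ + T)) * (ωr - k * U) * Real.sin (θT T);
    let f₂ : ℝ → ℝ := fun T =>
      Real.exp (ωi * t₀) * ωi * Real.sin θ₀ + Real.exp (ωi * t₀) * (ωr - k * U) * Real.cos θ₀
      - Real.exp (ωi * (t₀ + T)) * ωi * Real.sin (θT T)
      - Real.exp (ωi * (t₀ + T)) * (ωr - k * U) * Real.cos (θT T);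
    let f₃ : ℝ → ℝ := fun T =>
      -Real.exp (ωi * t₀) * (ωi ^ 2 + ωi ^ 3 * T - ωr ^ 2 + ωi * ωr ^ 2 * T
          - k ^ 2 * U ^ 2 + ωi * k ^ 2 * U ^ 2 * T + 2 * ωr * k * U
          - 2 * ωi * ωr * k * U * T) * Real.cos θ₀
      + Real.exp (ωi * t₀) * (2 * ωi * ωr + ωi ^ 2 * ωr * T + ωr ^ 3 * T
          - k ^ 3 * U ^ 3 * T + 3 * ωr * k ^ 2 * U ^ 2 * T - 2 * ωi * k * U
          - ωi ^ 2 * k * U * T - 3 * ωr ^ 2 * k * U * T) * Real.sin θ₀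
      + Real.exp (ωi * (t₀ + T)) * (ωi ^ 2 - ωr ^ 2 - k ^ 2 * U ^ 2
          + 2 * ωr * k * U) * Real.cos (θT T)
      - Real.exp (ωi * (t₀ + T)) * (2 * ωi * ωr - 2 * ωi * k * U) * Real.sin (θT T);
    let f₄ : ℝ → ℝ := fun T =>
      Real.exp (ωi * t₀) * (ωi ^ 2 + ωi ^ 3 * T - ωr ^ 2 + ωi * ωr ^ 2 * T
          - k ^ 2 * U ^ 2 + ωi * k ^ 2 * U ^ 2 * T + 2 * ωr * k * U
          - 2 * ωi * ωr * k * U * T) * Real.sin θ₀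
      + Real.exp (ωi * t₀) * (2 * ωi * ωr + ωi ^ 2 * ωr * T + ωr ^ 3 * T
          - k ^ 3 * U ^ 3 * T + 3 * ωr * k ^ 2 * U ^ 2 * T - 2 * ωi * k * U
          - ωi ^ 2 * k * U * T - 3 * ωr ^ 2 * k * U * T) * Real.cos θ₀
      - Real.exp (ωi * (t₀ + T)) * (ωi ^ 2 - ωr ^ 2 - k ^ 2 * U ^ 2
          + 2 * ωr * k * U) * Real.sin (θT T)
      - Real.exp (ωi * (t₀ + T)) * (2 * ωi * ωr - 2 * ωi * k * U) * Real.cos (θT T);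
    let f₅ : ℝ → ℝ := fun T =>
      -Real.exp (ωi * t₀) * ωi * Real.cos θ₀ + Real.exp (ωi * t₀) * (ωr - k * U) * Real.sin θ₀
      + Real.exp (ωi * (t₀ + T)) * ωi * Real.cos (θT T)
      - Real.exp (ωi * (t₀ + T)) * (ωr - k * U) * Real.sin (θT T);
    let f₆ : ℝ → ℝ := fun T =>
      Real.exp (ωi * t₀) * ωi * Real.sin θ₀ + Real.exp (ωi * t₀) * (ωr - k * U) * Real.cos θ₀
      - Real.exp (ωi * (t₀ + T)) * ωi * Real.sin (θT T)
      - Real.exp (ωi * (t₀ + T)) * (ωr - k * U) * Real.cos (θT T);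
    let A₂ : ℝ → ℝ := fun T => (f₅ T * vr + f₆ T * vi) / g;
    let A₁ : ℝ → ℝ := fun T => (f₁ T * ur + f₂ T * ui) / g
      + U' * (f₃ T * vr + f₄ T * vi) / g ^ 2;
    A₁ 0 = 0 ∧
    (∀ T : ℝ, HasDerivAt A₁
      (U' * A₂ T + Real.exp (ωi * (t₀ + T)) * (ur * Real.cos (θT T) - ui * Real.sin (θT T))) T) := by
  intro g θ₀ θT f₁ f₂ f₃ f₄ f₅ f₆ A₂ A₁
  have hg' : g ≠ 0 := hg
  have hgd : g = ωi ^ 2 + ωr ^ 2 - 2 * ωr * k * U + k ^ 2 * U ^ 2 := rfl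
  have hθ0 : θT 0 = θ₀ := by simp only [θT, θ₀]; ring
  constructor
  · have h1 : f₁ 0 = 0 := by simp only [f₁, hθ0, add_zero]; ring
    have h2 : f₂ 0 = 0 := by simp only [f₂, hθ0, add_zero]; ring
    have h3 : f₃ 0 = 0 := by simp only [f₃, hθ0, add_zero]; ring
    have h4 : f₄ 0 = 0 := by simp only [f₄, hθ0, add_zero]; ring
    simp only [A₁, h1, h2, h3, h4]
    ring
  · intro T
    let E₀ := Real.exp (ωi * t₀)
    have h1 : HasDerivAt f₁ (g * (Real.exp (ωi * (t₀ + T)) * Real.cos (θT T))) T := by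
      convert hasDerivAt_affine_add_phase k ωr ωi t₀ x₀ U
        (E₀ * (-ωi * Real.cos θ₀ + (ωr - k * U) * Real.sin θ₀)) 0
        ωi (-(ωr - k * U)) T using 1
      · funext s; simp only [f₁, E₀, θT]; ring
      · simp only [hgd, θT]; ring
    have h2 : HasDerivAt f₂ (-g * (Real.exp (ωi * (t₀ + T)) * Real.sin (θT T))) T := by
      convert hasDerivAt_affine_add_phase k ωr ωi t₀ x₀ U
        (E₀ * (ωi * Real.sin θ₀ + (ωr - k * U) * Real.cos θ₀)) 0
        (-(ωr - k * U)) (-ωi) T using 1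
      · funext s; simp only [f₂, E₀, θT]; ring
      · simp only [hgd, θT]; ring
    have h3 : HasDerivAt f₃ (g * f₅ T) T := by
      convert hasDerivAt_affine_add_phase k ωr ωi t₀ x₀ U
        (E₀ * (-(ωi ^ 2 - (ωr - k * U) ^ 2) * Real.cos θ₀
          + 2 * ωi * (ωr - k * U) * Real.sin θ₀))
        (g * E₀ * (-ωi * Real.cos θ₀ + (ωr - k * U) * Real.sin θ₀))
        (ωi ^ 2 - (ωr - k * U) ^ 2) (-(2 * ωi * (ωr - k * U))) T using 1
      · funext s; simp only [f₃, E₀, θT, hgd]; ring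
      · simp only [f₅, E₀, hgd, θT]; ring
    have h4 : HasDerivAt f₄ (g * f₆ T) T := by
      convert hasDerivAt_affine_add_phase k ωr ωi t₀ x₀ U
        (E₀ * ((ωi ^ 2 - (ωr - k * U) ^ 2) * Real.sin θ₀
          + 2 * ωi * (ωr - k * U) * Real.cos θ₀))
        (g * E₀ * (ωi * Real.sin θ₀ + (ωr - k * U) * Real.cos θ₀))
        (-(2 * ωi * (ωr - k * U))) (-(ωi ^ 2 - (ωr - k * U) ^ 2)) T using 1
      · funext s; simp only [f₄, E₀, θT, hgd]; ring
      · simp only [f₆, E₀, hgd, θT]; ring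
    refine ((((h1.mul_const ur).add (h2.mul_const ui)).div_const g).add
      ((((h3.mul_const vr).add (h4.mul_const vi)).const_mul U').div_const (g ^ 2))).congr_deriv ?_
    simp only [A₂]
    -- The values of `g`, `f₅`, `f₆` no longer matter; only `g ≠ 0` does.
    generalize f₅ T = F₅, f₆ T = F₆
    clear_value g
    field_simp
    ring
end

section
/- Fix reals k, ωᵣ, ω_i, t₀, T, x₀, y₀, U, v̂ᵣ, v̂ᵢ with g := ω_i² + ωᵣ² − 2ωᵣkU + k²U² ≠ 0, and let θ₀ = kx₀ − ωᵣt₀ and θ_T = kx₀ − ωᵣ(t₀+T) + kUT. Let A₂(x₀) = (f₅(x₀)v̂ᵣ + f₆(x₀)v̂ᵢ)/g with f₅, f₆ as in the flow-map formula (f₅(x₀) = −e^{ω_i t₀}ω_i cos θ₀ + e^{ω_i t₀}(ωᵣ−kU) sin θ₀ + e^{ω_i(t₀+T)}ω_i cos θ_T − e^{ω_i(t₀+T)}(ωᵣ−kU) sin θ_T and f₆(x₀) = e^{ω_i t₀}ω_i sin θ₀ + e^{ω_i t₀}(ωᵣ−kU) cos θ₀ − e^{ω_i(t₀+T)}ω_i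 sin θ_T − e^{ω_i(t₀+T)}(ωᵣ−kU) cos θ_T). Then the leading-order Lagrangian curvature change κ̄ := −d²A₂/dx₀² satisfies κ̄ = (k²/g)·[e^{ω_i t₀}((−ω_i v̂ᵣ + (ωᵣ−kU)v̂ᵢ)cos θ₀ + (ω_i v̂ᵢ + (ωᵣ−kU)v̂ᵣ)sin θ₀) + e^{ω_i(t₀+T)}((ω_i v̂ᵣ − (ωᵣ−kU)v̂ᵢ)cos θ_T − (ω_i v̂ᵢ + (ωᵣ−kU)v̂ᵣ)sin θ_T)], which is the curvature-change formula of Theorem 1. -/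
open Real

/-!
For a fixed wavenumber `k`, the span of `cos (k x + a)`, `sin (k x + a)`, `cos (k x + b)`,
`sin (k x + b)` is stable under `d/dx` (`hasDerivAt_wave`), and `d²/dx²` acts on it as
multiplication by `-k²` (`deriv_deriv_wave`). The deviation `A₂` lies in this span with
`a = -ωr t₀` and `b = -ωr (t₀ + T) + k U T`, so `-A₂'' = k² A₂`, and the formula is `k² A₂` with
the coefficients of the sines and cosines collected.
-/

/-- A superposition of two harmonics of wavenumber `k`, with phases `a` and `b`. -/
noncomputable def wave (k a b p q r s : ℝ) (x : ℝ) : ℝ :=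
  p * Real.cos (k * x + a) + q * Real.sin (k * x + a)
    + r * Real.cos (k * x + b) + s * Real.sin (k * x + b)

theorem hasDerivAt_wave (k a b p q r s x : ℝ) :
    HasDerivAt (wave k a b p q r s)
      (wave k a b (k * q) (-(k * p)) (k * s) (-(k * r)) x) x := by
  have h : ∀ c : ℝ, HasDerivAt (fun x : ℝ => k * x + c) k x := fun c => by
    simpa using ((hasDerivAt_id x).const_mul k).add_const c
  refine (((((h a).cos.const_mul p).add ((h a).sin.const_mul q)).add
    ((h b).cos.const_mul r)).add ((h b).sin.const_mul s)).congr_deriv ?_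
  simp only [wave]
  ring

theorem deriv_deriv_wave (k a b p q r s x : ℝ) :
    deriv (fun x => deriv (wave k a b p q r s) x) x = -(k ^ 2 * wave k a b p q r s x) := by
  have h : (fun x => deriv (wave k a b p q r s) x)
      = wave k a b (k * q) (-(k * p)) (k * s) (-(k * r)) :=
    funext fun x => (hasDerivAt_wave k a b p q r s x).deriv
  rw [h, (hasDerivAt_wave _ _ _ _ _ _ _ x).deriv]
  simp only [wave]
  ring

/-- The leading-order Lagrangian curvature change `κ̄ = −d²A₂/dx₀²`, with
`A₂(x₀) = (f₅(x₀)v̂ᵣ + f₆(x₀)v̂ᵢ)/g` the transverse flow-map deviation, equals the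
curvature-change formula of Theorem 1. -/
theorem curvature_change_formula
    (k ωr ωi t₀ T x₀ y₀ U vr vi : ℝ)
    (hg : ωi ^ 2 + ωr ^ 2 - 2 * ωr * k * U + k ^ 2 * U ^ 2 ≠ 0) :
    let g : ℝ := ωi ^ 2 + ωr ^ 2 - 2 * ωr * k * U + k ^ 2 * U ^ 2;
    let θ₀ : ℝ → ℝ := fun x => k * x - ωr * t₀;
    let θT : ℝ → ℝ := fun x => k * x - ωr * (t₀ + T) + k * U * T;
    let f₅ : ℝ → ℝ := fun x =>
      -Real.exp (ωi * t₀) * ωi * Real.cos (θ₀ x)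
      + Real.exp (ωi * t₀) * (ωr - k * U) * Real.sin (θ₀ x)
      + Real.exp (ωi * (t₀ + T)) * ωi * Real.cos (θT x)
      - Real.exp (ωi * (t₀ + T)) * (ωr - k * U) * Real.sin (θT x);
    let f₆ : ℝ → ℝ := fun x =>
      Real.exp (ωi * t₀) * ωi * Real.sin (θ₀ x)
      + Real.exp (ωi * t₀) * (ωr - k * U) * Real.cos (θ₀ x)
      - Real.exp (ωi * (t₀ + T)) * ωi * Real.sin (θT x)
      - Real.exp (ωi * (t₀ + T)) * (ωr - k * U) * Real.cos (θT x);
    let A₂ : ℝ → ℝ := fun x => (f₅ x * vr + f₆ x * vi) / g;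
    -(deriv (fun x => deriv A₂ x) x₀)
      = (k ^ 2 / g) *
        (Real.exp (ωi * t₀) *
          ((-ωi * vr + (ωr - k * U) * vi) * Real.cos (θ₀ x₀)
            + (ωi * vi + (ωr - k * U) * vr) * Real.sin (θ₀ x₀))
        + Real.exp (ωi * (t₀ + T)) *
          ((ωi * vr - (ωr - k * U) * vi) * Real.cos (θT x₀)
            - (ωi * vi + (ωr - k * U) * vr) * Real.sin (θT x₀))) := by
  intro g θ₀ θT f₅ f₆ A₂
  have hA : A₂ = wave k (-(ωr * t₀)) (-(ωr * (t₀ + T)) + k * U * T)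
      (Real.exp (ωi * t₀) * (-ωi * vr + (ωr - k * U) * vi) / g)
      (Real.exp (ωi * t₀) * (ωi * vi + (ωr - k * U) * vr) / g)
      (Real.exp (ωi * (t₀ + T)) * (ωi * vr - (ωr - k * U) * vi) / g)
      (-(Real.exp (ωi * (t₀ + T)) * (ωi * vi + (ωr - k * U) * vr)) / g) := by
    funext x
    have h₀ : k * x + -(ωr * t₀) = θ₀ x := by simp only [θ₀]; ring
    have hT : k * x + (-(ωr * (t₀ + T)) + k * U * T) = θT x := by simp only [θT]; ring
    simp only [A₂, f₅, f₆, wave, h₀, hT]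
    -- Generalizing keeps `ring` from expanding the phases, the exponents and `g`.
    generalize θ₀ x = α, θT x = β, Real.exp (ωi * t₀) = E, Real.exp (ωi * (t₀ + T)) = F, g = G
    ring
  have h₀ : k * x₀ + -(ωr * t₀) = θ₀ x₀ := by simp only [θ₀]; ring
  have hT : k * x₀ + (-(ωr * (t₀ + T)) + k * U * T) = θT x₀ := by simp only [θT]; ring
  rw [hA, deriv_deriv_wave]
  simp only [wave, h₀, hT]
  generalize θ₀ x₀ = α, θT x₀ = β, Real.exp (ωi * t₀) = E, Real.exp (ωi * (t₀ + T)) = F, g = G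
  ring
end

section
/- Fix reals k, ωᵣ, t₀, x₀, U, v̂ᵣ, v̂ᵢ and ω_i < 0, and set g = ω_i² + ωᵣ² − 2ωᵣkU + k²U² (note g > 0 since ω_i ≠ 0), θ₀ = kx₀ − ωᵣt₀ and θ_T = kx₀ − ωᵣ(t₀+T) + kUT. Then the curvature-change expression κ̄(T) = (k²/g)·[e^{ω_i t₀}((−ω_i v̂ᵣ + (ωᵣ−kU)v̂ᵢ)cos θ₀ + (ω_i v̂ᵢ + (ωᵣ−kU)v̂ᵣ)sin θ₀) + e^{ω_i(t₀+T)}((ω_i v̂ᵣ − (ωᵣ−kU)v̂ᵢ)cos θ_T − (ω_i v̂ᵢ + (ωᵣ−kU)v̂ᵣ)sin θ_T)] converges as T → ∞ to the finite value (k²/g)·e^{ω_i t₀}·((−ω_i v̂ᵣ + (ωᵣ−kU)v̂ᵢ)cos θ₀ + (ω_i v̂ᵢ + (ωᵣ−kU)v̂ᵣ)sin θ₀); that is, for a ceasing perturbation the Lagrangian curvature change retains a finite, nonvanishing memory of the initial perturbation. -/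
/-! The denominator is the sum of squares `ωi ^ 2 + (ωr - k * U) ^ 2`, positive because `ωi ≠ 0`.
The only `T`-dependent part of the curvature change is the factor `exp (ωi * (t₀ + T))`, which tends
to `0` since `ωi < 0`, times a trigonometric combination that is bounded uniformly in `T`; so that
part vanishes in the limit and only the contribution of the initial time remains. -/

open Real Filter

/-- For a ceasing perturbation (`ω_i < 0`), the denominator
`g = ω_i² + ωᵣ² − 2ωᵣkU + k²U²` is positive and the Lagrangian curvature change
`κ̄(T)` of Theorem 1 converges as `T → ∞` to the finite value
`(k²/g) e^{ω_i t₀}((−ω_i v̂ᵣ + (ωᵣ−kU)v̂ᵢ)cos θ₀ + (ω_i v̂ᵢ + (ωᵣ−kU)v̂ᵣ)sin θ₀)`: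
the curvature retains a finite memory of the initial perturbation. -/
theorem curvature_change_ceasing_perturbation
    (k ωr t₀ x₀ U vr vi ωi : ℝ) (hωi : ωi < 0) :
    let g : ℝ := ωi ^ 2 + ωr ^ 2 - 2 * ωr * k * U + k ^ 2 * U ^ 2;
    let θ₀ : ℝ := k * x₀ - ωr * t₀;
    let θT : ℝ → ℝ := fun T => k * x₀ - ωr * (t₀ + T) + k * U * T;
    let κ : ℝ → ℝ := fun T => (k ^ 2 / g) *
      (Real.exp (ωi * t₀) *
        ((-ωi * vr + (ωr - k * U) * vi) * Real.cos θ₀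
          + (ωi * vi + (ωr - k * U) * vr) * Real.sin θ₀)
      + Real.exp (ωi * (t₀ + T)) *
        ((ωi * vr - (ωr - k * U) * vi) * Real.cos (θT T)
          - (ωi * vi + (ωr - k * U) * vr) * Real.sin (θT T)));
    0 < g ∧
    Tendsto κ atTop
      (nhds ((k ^ 2 / g) * Real.exp (ωi * t₀) *
        ((-ωi * vr + (ωr - k * U) * vi) * Real.cos θ₀
          + (ωi * vi + (ωr - k * U) * vr) * Real.sin θ₀))) := by
  intro g θ₀ θT κ
  have hg : 0 < g := by
    have h : g = ωi ^ 2 + (ωr - k * U) ^ 2 := by simp only [g]; ring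
    rw [h]
    have := pow_pos (neg_pos.mpr hωi) 2
    nlinarith [sq_nonneg (ωr - k * U)]
  refine ⟨hg, ?_⟩
  have hexp : Tendsto (fun T : ℝ => Real.exp (ωi * (t₀ + T))) atTop (nhds 0) :=
    Real.tendsto_exp_atBot.comp
      ((tendsto_atTop_add_const_left atTop t₀ tendsto_id).const_mul_atTop_of_neg hωi)
  have hdecay : Tendsto (fun T : ℝ => Real.exp (ωi * (t₀ + T)) *
      ((ωi * vr - (ωr - k * U) * vi) * Real.cos (θT T)
        - (ωi * vi + (ωr - k * U) * vr) * Real.sin (θT T))) atTop (nhds 0) := by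
    refine hexp.zero_mul_isBoundedUnder_le (isBoundedUnder_of
      ⟨|ωi * vr - (ωr - k * U) * vi| + |ωi * vi + (ωr - k * U) * vr|, fun T => ?_⟩)
    simp only [Function.comp_apply, Real.norm_eq_abs]
    refine (abs_sub _ _).trans (add_le_add ?_ ?_)
    · rw [abs_mul]
      exact mul_le_of_le_one_right (abs_nonneg _) (Real.abs_cos_le_one _)
    · rw [abs_mul]
      exact mul_le_of_le_one_right (abs_nonneg _) (Real.abs_sin_le_one _)
  have hκ := (hdecay.const_add (Real.exp (ωi * t₀) *
    ((-ωi * vr + (ωr - k * U) * vi) * Real.cos θ₀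
      + (ωi * vi + (ωr - k * U) * vr) * Real.sin θ₀))).const_mul (k ^ 2 / g)
  rw [add_zero, ← mul_assoc] at hκ
  exact hκ
end
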